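/- Let κ be a (P,ρ)-kernel on a locally finite weakly ranked poset (P,ρ), with right KLS function f, left KLS function g, and Chow function ℋ. Then for every s < t in P: ℋ_{st}(x) = (f^rev_{st}(x) − f_{st}(x))/(x−1) + Σ_{s<w<t} ℋ_{sw}(x)·(f^rev_{wt}(x) − x·f_{wt}(x))/(x−1), and also ℋ_{st}(x) = (g^rev_{st}(x) − g_{st}(x))/(x−1) + Σ_{s<w<t} (g^rev_{sw}(x) − x·g_{sw}(x))/(x−1)·ℋ_{wt}(x). -/

import Mathlib

/-!
Writing `R` for the reduced kernel, `H * R = R * H = -1` in the incidence algebra, so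
`H * (R * f) = -f` and `(g * R) * H = -g` for all `f` and `g`. Expanding these products on `[s, t]`
and splitting off the two endpoint terms gives, up to the factor `X - 1`, the two decompositions,
because `(X - 1) R = κ - X δ` turns `(X - 1) (R * f)` into `κ * f - X f`, which is `f^rev - X f` for
the right KLS function.

That `X - 1` divides `κ s t` for `s < t` is seen at `x = 1`, where `κ` and `κ^rev` agree: there `κ`
is a unipotent involution over a ring in which `2` is regular, hence the identity.
-/

open Finset Polynomial
open scoped Classical

noncomputable section

variable {α : Type*}

/-- Convolution product in the incidence algebra of a locally finite poset over `ℤ[x]`.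
Only the values on intervals `s ≤ t` are relevant. -/
def conv [PartialOrder α] [LocallyFiniteOrder α] (a b : α → α → Polynomial ℤ) :
    α → α → Polynomial ℤ :=
  fun s t => ∑ w ∈ Finset.Icc s t, a s w * b w t

/-- The identity `δ` of the incidence algebra. -/
def dlt [PartialOrder α] : α → α → Polynomial ℤ :=
  fun s t => if s = t then 1 else 0

/-- The involution `a ↦ a^rev`, given by `(a^rev)_{st}(x) = x^{ρ_{st}} a_{st}(1/x)`. -/
def rev (ρ : α → α → ℕ) (a : α → α → Polynomial ℤ) : α → α → Polynomial ℤ :=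
  fun s t => (a s t).reflect (ρ s t)

/-- A weak rank function on a poset. -/
structure IsWeakRank [Preorder α] (ρ : α → α → ℕ) : Prop where
  pos : ∀ ⦃s t : α⦄, s < t → 0 < ρ s t
  add : ∀ ⦃s w t : α⦄, s ≤ w → w ≤ t → ρ s t = ρ s w + ρ w t

/-- `κ` is a `(P,ρ)`-kernel: it lies in `I_ρ(P)`, is `1` on the diagonal, and `κ⁻¹ = κ^rev`. -/
structure IsKernel [PartialOrder α] [LocallyFiniteOrder α] (ρ : α → α → ℕ)
    (κ : α → α → Polynomial ℤ) : Prop where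
  degLE : ∀ ⦃s t : α⦄, s ≤ t → (κ s t).natDegree ≤ ρ s t
  diag : ∀ s : α, κ s s = 1
  left : ∀ ⦃s t : α⦄, s ≤ t → conv (rev ρ κ) κ s t = dlt s t
  right : ∀ ⦃s t : α⦄, s ≤ t → conv κ (rev ρ κ) s t = dlt s t

/-- The reduced kernel `κ̄`: `κ̄_{st} = κ_{st}/(x-1)` for `s < t` and `κ̄_{ss} = -1`. -/
def red [PartialOrder α] (κ : α → α → Polynomial ℤ) : α → α → Polynomial ℤ :=
  fun s t => if s = t then -1 else κ s t /ₘ (X - 1)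

/-- `H` is the Chow function of `κ`, i.e. `H = -(κ̄)⁻¹`. -/
structure IsChow [PartialOrder α] [LocallyFiniteOrder α] (κ H : α → α → Polynomial ℤ) : Prop where
  left : ∀ ⦃s t : α⦄, s ≤ t → conv (red κ) H s t = -dlt s t
  right : ∀ ⦃s t : α⦄, s ≤ t → conv H (red κ) s t = -dlt s t

/-- `f` is the right KLS function of the kernel `κ`. -/
structure IsRightKLS [PartialOrder α] [LocallyFiniteOrder α] (ρ : α → α → ℕ)
    (κ f : α → α → Polynomial ℤ) : Prop where
  diag : ∀ s : α, f s s = 1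
  degLT : ∀ ⦃s t : α⦄, s < t → 2 * (f s t).natDegree < ρ s t
  rev_eq : ∀ ⦃s t : α⦄, s ≤ t → rev ρ f s t = conv κ f s t

/-- `g` is the left KLS function of the kernel `κ`. -/
structure IsLeftKLS [PartialOrder α] [LocallyFiniteOrder α] (ρ : α → α → ℕ)
    (κ g : α → α → Polynomial ℤ) : Prop where
  diag : ∀ s : α, g s s = 1
  degLT : ∀ ⦃s t : α⦄, s < t → 2 * (g s t).natDegree < ρ s t
  rev_eq : ∀ ⦃s t : α⦄, s ≤ t → rev ρ g s t = conv g κ s t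

/-- `p` is symmetric with center of symmetry `d/2`, i.e. `p(x) = x^d p(1/x)`. -/
def PolySymm (d : ℕ) (p : Polynomial ℤ) : Prop := p.natDegree ≤ d ∧ p.reflect d = p

/-- All coefficients of `p` are non-negative. -/
def PolyNonneg (p : Polynomial ℤ) : Prop := ∀ n, 0 ≤ p.coeff n

/-- The coefficient sequence of `p` is unimodal. -/
def PolyUnimodal (p : Polynomial ℤ) : Prop :=
  ∃ j, (∀ i < j, p.coeff i ≤ p.coeff (i + 1)) ∧ ∀ i, j ≤ i → p.coeff (i + 1) ≤ p.coeff i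

end

section IncidenceAlgebra

variable {α 𝕜 : Type*} [PartialOrder α] [LocallyFiniteOrder α]

theorem incidenceAlgebra_mul_apply_self [NonUnitalNonAssocSemiring 𝕜] (a b : IncidenceAlgebra 𝕜 α)
    (s : α) : (a * b) s s = a s s * b s s := by
  rw [IncidenceAlgebra.mul_apply, Icc_self, sum_singleton]

theorem incidenceAlgebra_mul_apply_of_lt [NonUnitalNonAssocSemiring 𝕜]
    (a b : IncidenceAlgebra 𝕜 α) {s t : α} (hst : s < t) :
    (a * b) s t = a s s * b s t + (a s t * b t t + ∑ w ∈ Ioo s t, a s w * b w t) := by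
  rw [IncidenceAlgebra.mul_apply, Icc_eq_cons_Ioc hst.le, sum_cons, Ioc_eq_cons_Ioo hst, sum_cons]

theorem incidenceAlgebra_isRightRegular_of_diag [NonUnitalNonAssocRing 𝕜]
    {b : IncidenceAlgebra 𝕜 α} (hb : ∀ t, IsRightRegular (b t t)) : IsRightRegular b := by
  intro a a' h
  ext s t hst
  induction hn : #(Icc s t) using Nat.strong_induction_on generalizing t with
  | _ n ih =>
    subst hn
    have hIco : ∑ w ∈ Ico s t, a s w * b w t = ∑ w ∈ Ico s t, a' s w * b w t := by
      refine sum_congr rfl fun w hw => ?_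
      obtain ⟨hsw, hwt⟩ := mem_Ico.1 hw
      rw [ih _ (card_lt_card (Icc_ssubset_Icc_right hst le_rfl hwt)) w hsw rfl]
    have hIcc : (a * b) s t = (a' * b) s t := congr($h s t)
    rw [IncidenceAlgebra.mul_apply, IncidenceAlgebra.mul_apply, Icc_eq_cons_Ico hst, sum_cons,
      sum_cons, hIco] at hIcc
    exact hb t (add_right_cancel hIcc)

theorem incidenceAlgebra_eq_one_of_mul_self_eq_one [DecidableEq α] [Ring 𝕜]
    (h2 : IsRightRegular (2 : 𝕜)) {a : IncidenceAlgebra 𝕜 α} (hdiag : ∀ s, a s s = 1)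
    (ha : a * a = 1) : a = 1 := by
  have hreg : IsRightRegular (a + 1) := incidenceAlgebra_isRightRegular_of_diag fun s => by
    rwa [IncidenceAlgebra.add_apply, hdiag, IncidenceAlgebra.one_apply, if_pos rfl,
      one_add_one_eq_two]
  refine hreg (show a * (a + 1) = 1 * (a + 1) from ?_)
  rw [mul_add, ha, mul_one, one_mul, add_comm]

section NegativeInverse

variable [DecidableEq α] [Ring 𝕜] {H R : IncidenceAlgebra 𝕜 α}

theorem apply_mul_diag_eq_of_mul_eq_neg_one (hHR : H * R = -1) (hR : ∀ s, R s s = -1)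
    (a : IncidenceAlgebra 𝕜 α) {s t : α} (hst : s < t) :
    H s t * a t t = a s t + (R * a) s t + ∑ w ∈ Ioo s t, H s w * (R * a) w t := by
  have hH : H s s = 1 := by
    simpa [incidenceAlgebra_mul_apply_self, hR, IncidenceAlgebra.neg_apply] using congr($hHR s s)
  have hRa : (R * a) t t = -a t t := by rw [incidenceAlgebra_mul_apply_self, hR, neg_one_mul]
  have h : (H * (R * a)) s t = -a s t := by
    rw [← mul_assoc, hHR, neg_one_mul, IncidenceAlgebra.neg_apply]
  rw [incidenceAlgebra_mul_apply_of_lt _ _ hst, hH, hRa, one_mul, mul_neg] at h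
  linear_combination (norm := abel) -h

theorem diag_mul_apply_eq_of_mul_eq_neg_one (hRH : R * H = -1) (hR : ∀ s, R s s = -1)
    (a : IncidenceAlgebra 𝕜 α) {s t : α} (hst : s < t) :
    a s s * H s t = a s t + (a * R) s t + ∑ w ∈ Ioo s t, (a * R) s w * H w t := by
  have hH : H t t = 1 := by
    simpa [incidenceAlgebra_mul_apply_self, hR, IncidenceAlgebra.neg_apply] using congr($hRH t t)
  have haR : (a * R) s s = -a s s := by rw [incidenceAlgebra_mul_apply_self, hR, mul_neg_one]
  have h : (a * R * H) s t = -a s t := by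
    rw [mul_assoc, hRH, mul_neg_one, IncidenceAlgebra.neg_apply]
  rw [incidenceAlgebra_mul_apply_of_lt _ _ hst, hH, haR, mul_one, neg_mul] at h
  linear_combination (norm := abel) -h

end NegativeInverse

end IncidenceAlgebra

section ToIncidence

variable {α 𝕜 : Type*}

/-- The element of the incidence algebra with the values of `a` on the intervals `[s, t]`, `s ≤ t`.
It discards the values of `a` at the other pairs, which the definitions of kernels, KLS functions
and Chow functions leave arbitrary, so that `IncidenceAlgebra` supplies the ring structure. -/
noncomputable def toIncidence [Zero 𝕜] [LE α] (a : α → α → 𝕜) : IncidenceAlgebra 𝕜 α where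
  toFun s t := if s ≤ t then a s t else 0
  eq_zero_of_not_le' _ _ h := if_neg h

theorem toIncidence_apply [Zero 𝕜] [LE α] (a : α → α → 𝕜) {s t : α} (hst : s ≤ t) :
    toIncidence a s t = a s t :=
  if_pos hst

theorem toIncidence_red_self [PartialOrder α] (κ : α → α → ℤ[X]) (s : α) :
    toIncidence (red κ) s s = -1 := by
  rw [toIncidence_apply _ le_rfl, red, if_pos rfl]

variable [PartialOrder α] [LocallyFiniteOrder α]

theorem toIncidence_mul_apply [NonUnitalNonAssocSemiring 𝕜] (a b : α → α → 𝕜) (s t : α) :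
    (toIncidence a * toIncidence b) s t = ∑ w ∈ Icc s t, a s w * b w t := by
  refine sum_congr rfl fun w hw => ?_
  obtain ⟨hsw, hwt⟩ := mem_Icc.1 hw
  exact congrArg₂ (· * ·) (toIncidence_apply a hsw) (toIncidence_apply b hwt)

theorem toIncidence_mul_apply_eq_conv (a b : α → α → ℤ[X]) (s t : α) :
    (toIncidence a * toIncidence b) s t = conv a b s t :=
  toIncidence_mul_apply a b s t

end ToIncidence

theorem eval_one_reflect {R : Type*} [Semiring R] (N : ℕ) (p : R[X]) :
    (p.reflect N).eval 1 = p.eval 1 := by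
  induction p using Polynomial.induction_on' with
  | add p q hp hq => rw [reflect_add, eval_add, eval_add, hp, hq]
  | monomial n c => simp [← C_mul_X_pow_eq_monomial]

section ChowFunction

variable {α : Type*} [PartialOrder α] [LocallyFiniteOrder α] {κ H : α → α → ℤ[X]}

theorem IsKernel.toIncidence_eval_one {ρ : α → α → ℕ} (hκ : IsKernel ρ κ) :
    toIncidence (fun s t => (κ s t).eval 1) = 1 := by
  have h2 : IsRightRegular (2 : ℤ) := (IsRegular.of_ne_zero two_ne_zero).right
  refine incidenceAlgebra_eq_one_of_mul_self_eq_one h2 ?_ ?_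
  · intro s
    rw [toIncidence_apply _ le_rfl, hκ.diag, eval_one]
  · ext s t hst
    have h := congrArg (Polynomial.eval 1) (hκ.right hst)
    simp only [conv, rev, eval_finsetSum, eval_mul, eval_one_reflect] at h
    rw [toIncidence_mul_apply, h, dlt, IncidenceAlgebra.one_apply, apply_ite (Polynomial.eval 1),
      eval_one, eval_zero]

theorem IsKernel.isRoot_one {ρ : α → α → ℕ} (hκ : IsKernel ρ κ) ⦃s t : α⦄ (hst : s < t) :
    (κ s t).IsRoot 1 := by
  have h := congr($hκ.toIncidence_eval_one s t)
  rwa [toIncidence_apply _ hst.le, IncidenceAlgebra.one_apply, if_neg hst.ne] at h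

theorem X_sub_one_smul_toIncidence_red (hdiag : ∀ s, κ s s = 1)
    (hroot : ∀ ⦃s t⦄, s < t → (κ s t).IsRoot 1) :
    (X - 1 : ℤ[X]) • toIncidence (red κ) = toIncidence κ - (X : ℤ[X]) • 1 := by
  ext1 s t hst
  rw [IncidenceAlgebra.sub_apply, IncidenceAlgebra.constSMul_apply,
    IncidenceAlgebra.constSMul_apply, IncidenceAlgebra.one_apply, toIncidence_apply _ hst,
    toIncidence_apply _ hst, smul_eq_mul, smul_eq_mul, red]
  rcases hst.eq_or_lt with rfl | hlt
  · rw [if_pos rfl, if_pos rfl, hdiag]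
    ring
  · have hdvd := mul_divByMonic_eq_iff_isRoot.2 (hroot hlt)
    rw [C_1] at hdvd
    rw [if_neg hlt.ne, if_neg hlt.ne, hdvd, mul_zero, sub_zero]

theorem X_sub_one_mul_red_conv (hdiag : ∀ s, κ s s = 1)
    (hroot : ∀ ⦃s t⦄, s < t → (κ s t).IsRoot 1) (f : α → α → ℤ[X]) {s t : α} (hst : s ≤ t) :
    (X - 1) * conv (red κ) f s t = conv κ f s t - X * f s t := by
  have h : (X - 1 : ℤ[X]) • (toIncidence (red κ) * toIncidence f) =
      toIncidence κ * toIncidence f - (X : ℤ[X]) • toIncidence f := by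
    rw [← smul_mul_assoc, X_sub_one_smul_toIncidence_red hdiag hroot, sub_mul, smul_mul_assoc,
      one_mul]
  simpa only [IncidenceAlgebra.sub_apply, IncidenceAlgebra.constSMul_apply, smul_eq_mul,
    toIncidence_mul_apply_eq_conv, toIncidence_apply f hst] using congr($h s t)

theorem X_sub_one_mul_conv_red (hdiag : ∀ s, κ s s = 1)
    (hroot : ∀ ⦃s t⦄, s < t → (κ s t).IsRoot 1) (g : α → α → ℤ[X]) {s t : α} (hst : s ≤ t) :
    (X - 1) * conv g (red κ) s t = conv g κ s t - X * g s t := by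
  have h : (X - 1 : ℤ[X]) • (toIncidence g * toIncidence (red κ)) =
      toIncidence g * toIncidence κ - (X : ℤ[X]) • toIncidence g := by
    rw [← mul_smul_comm, X_sub_one_smul_toIncidence_red hdiag hroot, mul_sub, mul_smul_comm,
      mul_one]
  simpa only [IncidenceAlgebra.sub_apply, IncidenceAlgebra.constSMul_apply, smul_eq_mul,
    toIncidence_mul_apply_eq_conv, toIncidence_apply g hst] using congr($h s t)

theorem IsChow.toIncidence_mul_red (hH : IsChow κ H) :
    toIncidence H * toIncidence (red κ) = -1 := by
  ext1 s t hst
  rw [toIncidence_mul_apply_eq_conv, hH.right hst]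
  rfl

theorem IsChow.toIncidence_red_mul (hH : IsChow κ H) :
    toIncidence (red κ) * toIncidence H = -1 := by
  ext1 s t hst
  rw [toIncidence_mul_apply_eq_conv, hH.left hst]
  rfl

theorem IsChow.apply_mul_diag (hH : IsChow κ H) (f : α → α → ℤ[X]) {s t : α} (hst : s < t) :
    H s t * f t t =
      f s t + conv (red κ) f s t + ∑ w ∈ Ioo s t, H s w * conv (red κ) f w t := by
  have h := apply_mul_diag_eq_of_mul_eq_neg_one hH.toIncidence_mul_red (toIncidence_red_self κ)
    (toIncidence f) hst
  simp only [toIncidence_mul_apply_eq_conv, toIncidence_apply _ hst.le,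
    toIncidence_apply _ (le_refl t)] at h
  rw [h]
  congr! 2 with w hw
  rw [toIncidence_apply _ (mem_Ioo.1 hw).1.le]

theorem IsChow.diag_mul_apply (hH : IsChow κ H) (g : α → α → ℤ[X]) {s t : α} (hst : s < t) :
    g s s * H s t =
      g s t + conv g (red κ) s t + ∑ w ∈ Ioo s t, conv g (red κ) s w * H w t := by
  have h := diag_mul_apply_eq_of_mul_eq_neg_one hH.toIncidence_red_mul (toIncidence_red_self κ)
    (toIncidence g) hst
  simp only [toIncidence_mul_apply_eq_conv, toIncidence_apply _ hst.le,
    toIncidence_apply _ (le_refl s)] at h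
  rw [h]
  congr! 2 with w hw
  rw [toIncidence_apply _ (mem_Ioo.1 hw).2.le]

/-- The functions `f'` and `g'` play the role of `f^rev` and `g^rev`. -/
theorem numerical_canonical_decomposition_general (hdiag : ∀ s, κ s s = 1)
    (hroot : ∀ ⦃s t⦄, s < t → (κ s t).IsRoot 1) (hH : IsChow κ H)
    {f f' g g' : α → α → ℤ[X]} {s t : α} (hft : f t t = 1)
    (hf' : ∀ ⦃s t⦄, s ≤ t → f' s t = conv κ f s t) (hgs : g s s = 1)
    (hg' : ∀ ⦃s t⦄, s ≤ t → g' s t = conv g κ s t) (hst : s < t) :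
    (X - 1) * H s t
        = (f' s t - f s t) + ∑ w ∈ Ioo s t, H s w * (f' w t - X * f w t) ∧
    (X - 1) * H s t
        = (g' s t - g s t) + ∑ w ∈ Ioo s t, (g' s w - X * g s w) * H w t := by
  have hf : ∀ w ≤ t, f' w t - X * f w t = (X - 1) * conv (red κ) f w t := fun w hwt => by
    rw [hf' hwt, X_sub_one_mul_red_conv hdiag hroot f hwt]
  have hg : ∀ w, s ≤ w → g' s w - X * g s w = (X - 1) * conv g (red κ) s w := fun w hsw => by
    rw [hg' hsw, X_sub_one_mul_conv_red hdiag hroot g hsw]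
  constructor
  · have hsum : ∑ w ∈ Ioo s t, H s w * (f' w t - X * f w t) =
        (X - 1) * ∑ w ∈ Ioo s t, H s w * conv (red κ) f w t := by
      rw [mul_sum]
      refine sum_congr rfl fun w hw => ?_
      rw [hf w (mem_Ioo.1 hw).2.le, mul_left_comm]
    have h := hH.apply_mul_diag f hst
    rw [hft, mul_one] at h
    linear_combination (X - 1) * h - hf s hst.le - hsum
  · have hsum : ∑ w ∈ Ioo s t, (g' s w - X * g s w) * H w t =
        (X - 1) * ∑ w ∈ Ioo s t, conv g (red κ) s w * H w t := by
      rw [mul_sum]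
      refine sum_congr rfl fun w hw => ?_
      rw [hg w (mem_Ioo.1 hw).1.le, mul_assoc]
    have h := hH.diag_mul_apply g hst
    rw [hgs, one_mul] at h
    linear_combination (X - 1) * h - hg t hst.le - hsum

end ChowFunction

/-- Theorem 3.8 (numerical canonical decomposition): for every `s < t`,
`ℋ_{st} = (f^rev_{st} - f_{st})/(x-1) + Σ_{s<w<t} ℋ_{sw} (f^rev_{wt} - x f_{wt})/(x-1)` and
`ℋ_{st} = (g^rev_{st} - g_{st})/(x-1) + Σ_{s<w<t} (g^rev_{sw} - x g_{sw})/(x-1) ℋ_{wt}`.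
(The identities are stated after clearing the denominator `x - 1`.) -/
theorem numerical_canonical_decomposition [PartialOrder α] [LocallyFiniteOrder α]
    (ρ : α → α → ℕ) (hρ : IsWeakRank ρ)
    (κ : α → α → Polynomial ℤ) (hκ : IsKernel ρ κ)
    (H : α → α → Polynomial ℤ) (hH : IsChow κ H)
    (f : α → α → Polynomial ℤ) (hf : IsRightKLS ρ κ f)
    (g : α → α → Polynomial ℤ) (hg : IsLeftKLS ρ κ g)
    (s t : α) (hst : s < t) :
    (X - 1) * H s t
        = (rev ρ f s t - f s t)
          + ∑ w ∈ Finset.Ioo s t, H s w * (rev ρ f w t - X * f w t) ∧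
    (X - 1) * H s t
        = (rev ρ g s t - g s t)
          + ∑ w ∈ Finset.Ioo s t, (rev ρ g s w - X * g s w) * H w t :=
  numerical_canonical_decomposition_general hκ.diag hκ.isRoot_one hH (hf.diag t) hf.rev_eq
    (hg.diag s) hg.rev_eq hst
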